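/- arXiv:1412.1714 — 2 statements merged into one kernel-verified Lean document; each statement's English description precedes it below -/
import Mathlib

section
/- Let (X, μ) be a median algebra and let f : [0,1]ʳ → X be a median embedding (where [0,1]ʳ carries the coordinatewise median) such that the image by f of every edge of [0,1]ʳ is convex in X. Then the image of f equals the interval I(f(0,…,0), f(1,…,1)) = {c ∈ X | μ(f(0,…,0), f(1,…,1), c) = c}. -/
/-- A median on a set `X` (the median algebra axioms). -/
def IsMedianAlgebra {X : Type*} (m : X → X → X → X) : Prop :=
  (∀ a b c, m a b c = m b a c) ∧
  (∀ a b c, m a b c = m b c a) ∧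
  (∀ a b, m a a b = a) ∧
  (∀ a b c d e, m a b (m c d e) = m (m a b c) (m a b d) e)
/-- The interval `I(a, b) = {c | μ(a,b,c) = c}`. -/
def mInterval {X : Type*} (m : X → X → X → X) (a b : X) : Set X := {c | m a b c = c}
/-- A subset `C` is convex if `I(a,b) ⊆ C` for all `a, b ∈ C`. -/
def MConvex {X : Type*} (m : X → X → X → X) (C : Set X) : Prop :=
  ∀ a ∈ C, ∀ b ∈ C, mInterval m a b ⊆ C
/-- The median (middle value) of three real numbers. -/
noncomputable def rmed (a b c : ℝ) : ℝ := min (max a b) (min (max b c) (max a c))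

/-- The coordinate median of three elements of `[0,1]`. -/
noncomputable def imed (a b c : unitInterval) : unitInterval :=
  ⟨rmed a.1 b.1 c.1, by
    constructor
    · simp only [rmed, le_min_iff, le_max_iff]
      exact ⟨Or.inl a.2.1, Or.inl b.2.1, Or.inl a.2.1⟩
    · exact min_le_of_left_le (max_le a.2.2 b.2.2)⟩

/-!
Write `o = f ⊥` and `e = f ⊤`. In a bounded lattice `x ⊔ y` is the median of `x`, `y` and `⊤`, so
the distributive law `μ(o, c, μ(f x, f y, e)) = μ(μ(o, c, f x), μ(o, c, f y), e)` shows that if the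
range of `f` contains `I(o, f x)` and `I(o, f y)`, then it contains `I(o, f (x ⊔ y))`. In the cube,
`⊤` is the supremum of the far ends of the edges issuing from `⊥`, and the range contains the
intervals spanned by these edges by convexity; hence it contains `I(o, e)`.
-/

namespace IsMedianAlgebra

variable {X : Type*} {m : X → X → X → X}

theorem apply_right_comm (hm : IsMedianAlgebra m) (a b c : X) : m a b c = m a c b := by
  rw [hm.2.1, hm.2.1, hm.1]

theorem apply_self_right (hm : IsMedianAlgebra m) (a b : X) : m a b b = b := by
  rw [hm.2.1, hm.2.2.1]

theorem apply_self_outer (hm : IsMedianAlgebra m) (a b : X) : m a b a = a := by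
  rw [hm.apply_right_comm, hm.2.2.1]

theorem apply_mem_mInterval (hm : IsMedianAlgebra m) (a b c : X) : m a b c ∈ mInterval m a b :=
  calc m a b (m a b c) = m (m a b a) (m a b b) c := hm.2.2.2 a b a b c
    _ = m a b c := by rw [hm.apply_self_outer, hm.apply_self_right]

end IsMedianAlgebra

/-- The median of three elements of a lattice, extending `imed` beyond `[0,1]`. Of the two dual
lattice expressions for the median this is the meet of joins, as in `rmed`, so that the
coordinatewise `imed` is definitionally the `latticeMedian` of the cube. -/
def latticeMedian {L : Type*} [Lattice L] (a b c : L) : L := (a ⊔ b) ⊓ ((b ⊔ c) ⊓ (a ⊔ c))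

theorem latticeMedian_bot_top {L : Type*} [Lattice L] [BoundedOrder L] (a : L) :
    latticeMedian ⊥ ⊤ a = a := by
  simp [latticeMedian]

theorem latticeMedian_top_right {L : Type*} [Lattice L] [OrderTop L] (a b : L) :
    latticeMedian a b ⊤ = a ⊔ b := by
  simp [latticeMedian]

section LatticeMedianHom

variable {X L : Type*} {m : X → X → X → X} [Lattice L] [BoundedOrder L] {f : L → X}

theorem range_subset_mInterval (hf : ∀ x y z, f (latticeMedian x y z) = m (f x) (f y) (f z)) :
    Set.range f ⊆ mInterval m (f ⊥) (f ⊤) := by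
  rintro _ ⟨x, rfl⟩
  change m (f ⊥) (f ⊤) (f x) = f x
  rw [← hf, latticeMedian_bot_top]

theorem mInterval_sup_subset_range (hm : IsMedianAlgebra m)
    (hf : ∀ x y z, f (latticeMedian x y z) = m (f x) (f y) (f z)) {a b : L}
    (ha : mInterval m (f ⊥) (f a) ⊆ Set.range f) (hb : mInterval m (f ⊥) (f b) ⊆ Set.range f) :
    mInterval m (f ⊥) (f (a ⊔ b)) ⊆ Set.range f := by
  intro c (hc : m (f ⊥) (f (a ⊔ b)) c = c)
  have map_sup (x y : L) : f (x ⊔ y) = m (f x) (f y) (f ⊤) := by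
    rw [← hf, latticeMedian_top_right]
  obtain ⟨s, hs⟩ := ha (hm.apply_mem_mInterval (f ⊥) (f a) c)
  obtain ⟨t, ht⟩ := hb (hm.apply_mem_mInterval (f ⊥) (f b) c)
  refine ⟨s ⊔ t, ?_⟩
  calc f (s ⊔ t) = m (m (f ⊥) c (f a)) (m (f ⊥) c (f b)) (f ⊤) := by
        rw [map_sup, hs, ht, hm.apply_right_comm _ (f a), hm.apply_right_comm _ (f b)]
    _ = m (f ⊥) c (f (a ⊔ b)) := by rw [← hm.2.2.2, ← map_sup]
    _ = c := by rw [hm.apply_right_comm, hc]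

theorem mInterval_finset_sup_subset_range (hm : IsMedianAlgebra m)
    (hf : ∀ x y z, f (latticeMedian x y z) = m (f x) (f y) (f z)) {ι : Type*} (s : Finset ι)
    (a : ι → L) (ha : ∀ i ∈ s, mInterval m (f ⊥) (f (a i)) ⊆ Set.range f) :
    mInterval m (f ⊥) (f (s.sup a)) ⊆ Set.range f := by
  refine Finset.sup_induction (p := fun x ↦ mInterval m (f ⊥) (f x) ⊆ Set.range f) ?_
    (fun _ hx _ hy ↦ mInterval_sup_subset_range hm hf hx hy) ha
  intro c (hc : m (f ⊥) (f ⊥) c = c)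
  exact ⟨⊥, by rw [← hc, hm.2.2.1]⟩

end LatticeMedianHom

section Pi

variable {ι : Type*} [DecidableEq ι] {α : ι → Type*}

theorem sup_univ_update_bot_top [Fintype ι] [∀ i, SemilatticeSup (α i)]
    [∀ i, BoundedOrder (α i)] :
    (Finset.univ.sup fun i ↦ Function.update (⊥ : ∀ i, α i) i ⊤) = ⊤ := by
  refine eq_top_iff.2 fun i ↦ ?_
  calc (⊤ : α i) = Function.update (⊥ : ∀ i, α i) i ⊤ i := (Function.update_self i ⊤ ⊥).symm
    _ ≤ _ := Finset.le_sup (f := fun i ↦ Function.update (⊥ : ∀ i, α i) i ⊤) (Finset.mem_univ i) i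

theorem image_of_cube_eq_interval_general [Finite ι] [∀ i, Lattice (α i)]
    [∀ i, BoundedOrder (α i)] {X : Type*} {m : X → X → X → X}
    (hm : IsMedianAlgebra m) {f : (∀ i, α i) → X}
    (hf : ∀ x y z, f (latticeMedian x y z) = m (f x) (f y) (f z))
    (hedge : ∀ i, mInterval m (f ⊥) (f (Function.update ⊥ i ⊤)) ⊆ Set.range f) :
    Set.range f = mInterval m (f ⊥) (f ⊤) := by
  have := Fintype.ofFinite ι
  refine (range_subset_mInterval hf).antisymm ?_
  rw [← sup_univ_update_bot_top]
  exact mInterval_finset_sup_subset_range hm hf _ _ fun i _ ↦ hedge i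

end Pi

/-- If a median embedding of `[0,1]ʳ` into a median algebra sends every edge of the cube
to a convex subset, then its image is the interval between the images of the corners. -/
theorem image_of_cube_eq_interval {X : Type*} (m : X → X → X → X)
    (hmed : IsMedianAlgebra m) (r : ℕ)
    (f : (Fin r → unitInterval) → X)
    (hfinj : Function.Injective f)
    (hfmed : ∀ x y z : Fin r → unitInterval,
      f (fun i => imed (x i) (y i) (z i)) = m (f x) (f y) (f z))
    (hedge : ∀ (i : Fin r) (v : Fin r → unitInterval), (∀ j, v j = 0 ∨ v j = 1) →
      MConvex m (f '' {t | ∀ j, j ≠ i → t j = v j})) :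
    Set.range f = mInterval m (f fun _ => 0) (f fun _ => 1) :=
  image_of_cube_eq_interval_general hmed hfmed fun i ↦
    (hedge i ⊥ (fun _ ↦ Or.inl rfl) _ ⟨⊥, fun _ _ ↦ rfl, rfl⟩ _
      ⟨_, fun _ hj ↦ Function.update_of_ne hj ⊤ ⊥, rfl⟩).trans (Set.image_subset_range _ _)
end

section
/- Let X be a connected metric space with a Lipschitz, locally convex median of rank r (i.e. every median embedding of an n-cube {0,1}ⁿ into X satisfies n ≤ r, and some median embedding of {0,1}ʳ into X exists). Then the separation dimension of X equals r. -/
/-- The coordinatewise median on the cube `{0,1}ⁿ`. -/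
def bmed {n : ℕ} (x y z : Fin n → Bool) : Fin n → Bool :=
  fun i => (x i && y i) || (y i && z i) || (x i && z i)
universe u

/-- `SepDimLE n X` means the separation dimension of `X` is at most `n - 1`
(so `SepDimLE 0 X` means `X = ∅`, i.e. dimension `≤ -1`). -/
def SepDimLE : (n : ℕ) → (X : Type u) → [TopologicalSpace X] → Prop
  | 0, X, _ => IsEmpty X
  | n+1, X, _ => ∀ x y : X, x ≠ y → ∃ A B : Set X, IsClosed A ∧ IsClosed B ∧
      x ∉ B ∧ y ∉ A ∧ A ∪ B = Set.univ ∧ SepDimLE n ↥(A ∩ B)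

/-!
By Kakutani's theorem, disjoint convex sets of a median algebra are separated by a halfspace, so
the algebra is determined by its homomorphisms to `{0, 1}`; and if `n` of these homomorphisms
jointly map onto `{0, 1}ⁿ`, then gate maps turn arbitrary preimages of the vertices into an
embedded `n`-cube.

*Dimension is at most rank.* Two distinct points have disjoint convex neighbourhoods, hence are
separated by the wall of a halfspace. An `n`-cube in the wall thickens to an `(n + 1)`-cube of the
space, so the wall has smaller rank, and induction on the rank applies.

*Rank is at most dimension.* Let `f` embed a cube of maximal dimension `r`. A pair of incomparable
points on the interval spanned by an edge at `f ⊥` would give a cube of dimension `r + 1`, so each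
of these `r` intervals is linearly ordered; being connected and locally convex, it is compact. The
product of the `r` intervals embeds continuously in the space, by joining the coordinates in the
order based at `f ⊥`. Were the dimension of the product less than `r`, its continuous maps to `ℝʳ`
could be perturbed so as to avoid zero, contrary to the Poincaré–Miranda theorem.
-/

/-! ### Median algebras -/

section MedianAlgebra

variable {X : Type*} {m : X → X → X → X}

lemma mem_mInterval {a b c : X} : c ∈ mInterval m a b ↔ m a b c = c := Iff.rfl

namespace IsMedianAlgebra

lemma left_comm (h : IsMedianAlgebra m) (a b c : X) : m a b c = m b a c := h.1 a b c

lemma rotate (h : IsMedianAlgebra m) (a b c : X) : m a b c = m b c a := h.2.1 a b c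

lemma right_comm (h : IsMedianAlgebra m) (a b c : X) : m a b c = m a c b := by
  rw [h.rotate, h.rotate, h.left_comm]

lemma self_left (h : IsMedianAlgebra m) (a b : X) : m a a b = a := h.2.2.1 a b

lemma self_outer (h : IsMedianAlgebra m) (a b : X) : m a b a = a := by
  rw [h.right_comm, h.self_left]

lemma self_right (h : IsMedianAlgebra m) (a b : X) : m a b b = b := by
  rw [h.rotate, h.self_left]

lemma distrib (h : IsMedianAlgebra m) (a b c d e : X) :
    m a b (m c d e) = m (m a b c) (m a b d) e := h.2.2.2 a b c d e

lemma median_mem_interval (h : IsMedianAlgebra m) (a b c : X) : m a b c ∈ mInterval m a b := by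
  rw [mem_mInterval, h.distrib, h.self_outer, h.self_right]

lemma distrib₃ (h : IsMedianAlgebra m) (a b c d e : X) :
    m a b (m c d e) = m (m a b c) (m a b d) (m a b e) :=
  calc m a b (m c d e)
    _ = m a b (m e (m a b c) (m a b d)) := by
      rw [← h.median_mem_interval a b (m c d e), h.distrib a b c d e, h.rotate e]
    _ = m (m a b e) (m a b c) (m a b d) := by
      rw [h.distrib, h.median_mem_interval a b c]
    _ = m (m a b c) (m a b d) (m a b e) := h.rotate ..

lemma assoc (h : IsMedianAlgebra m) (x a b c : X) : m x (m x a b) c = m x a (m x b c) := by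
  rw [h.distrib, h.self_outer]

lemma left_mem_interval (h : IsMedianAlgebra m) (a b : X) : a ∈ mInterval m a b :=
  h.self_outer a b

lemma right_mem_interval (h : IsMedianAlgebra m) (a b : X) : b ∈ mInterval m a b :=
  h.self_right a b

lemma interval_self (h : IsMedianAlgebra m) (a : X) : mInterval m a a = {a} := by
  ext c
  rw [mem_mInterval, h.self_left, Set.mem_singleton_iff, eq_comm]

lemma interval_comm (h : IsMedianAlgebra m) (a b : X) : mInterval m a b = mInterval m b a := by
  simp only [mInterval, h.left_comm a b]

lemma convex_singleton (h : IsMedianAlgebra m) (a : X) : MConvex m {a} := by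
  rintro _ rfl _ rfl
  exact (h.interval_self _).subset

lemma convex_interval (h : IsMedianAlgebra m) (a b : X) : MConvex m (mInterval m a b) := by
  intro p hp q hq w hw
  rw [mem_mInterval] at *
  rw [← hw, h.distrib, hp, hq]

/-- The union of the intervals from `z` to the points of `C`; it is the convex hull of
`C ∪ {z}` when `C` is convex and nonempty. -/
def join (m : X → X → X → X) (z : X) (C : Set X) : Set X := ⋃ c ∈ C, mInterval m z c

lemma subset_join (h : IsMedianAlgebra m) (z : X) (C : Set X) : C ⊆ join m z C :=
  fun c hc => Set.mem_biUnion hc (h.right_mem_interval z c)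

lemma mem_join (h : IsMedianAlgebra m) (z : X) {C : Set X} (hC : C.Nonempty) : z ∈ join m z C :=
  let ⟨c, hc⟩ := hC
  Set.mem_biUnion hc (h.left_mem_interval z c)

-- `m w` is the meet of the order based at `w`, in which `p' ≤ p` and `q' ≤ q`.
lemma median_eq_left_of_mem (h : IsMedianAlgebra m) {w p q p' q' : X}
    (hp : p' ∈ mInterval m w p) (hq : q' ∈ mInterval m w q) (hw : m w p q = w) :
    m w p' q' = w :=
  have hw' : m w p' q = w := by
    rw [← mem_mInterval.1 hp, h.right_comm w p p', h.assoc, hw, h.self_outer]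
  by rw [← mem_mInterval.1 hq, ← h.assoc, hw', h.self_left]

lemma median_mem_interval_self (h : IsMedianAlgebra m) {z c p : X} (hp : p ∈ mInterval m z c)
    (w : X) : m z c w ∈ mInterval m w p :=
  calc m w p (m z c w)
    _ = m (m z c w) (m z c p) w := by rw [mem_mInterval.1 hp, h.rotate, h.rotate, h.right_comm]
    _ = m z c w := by rw [← h.distrib, h.self_outer]

lemma mem_interval_median (h : IsMedianAlgebra m) {z c c' p q w : X}
    (hp : p ∈ mInterval m z c) (hq : q ∈ mInterval m z c') (hw : w ∈ mInterval m p q) :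
    w ∈ mInterval m z (m c c' w) :=
  calc m z (m c c' w) w
    _ = m w z (m c c' w) := h.rotate .. |>.trans (h.rotate ..)
    _ = m (m w z c) (m w z c') w := h.distrib ..
    _ = m w (m z c w) (m z c' w) := by rw [h.rotate w z c, h.rotate w z c', h.rotate w]
    _ = w := h.median_eq_left_of_mem (h.median_mem_interval_self hp w)
      (h.median_mem_interval_self hq w) (by rw [h.rotate, mem_mInterval.1 hw])

lemma convex_join (h : IsMedianAlgebra m) (z : X) {C : Set X} (hC : MConvex m C) :
    MConvex m (join m z C) := by
  intro p hp q hq w hw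
  obtain ⟨c, hc, hpc⟩ := Set.mem_iUnion₂.1 hp
  obtain ⟨c', hc', hqc'⟩ := Set.mem_iUnion₂.1 hq
  exact Set.mem_biUnion (hC c hc c' hc' (h.median_mem_interval c c' w))
    (h.mem_interval_median hpc hqc' hw)

lemma pasch (h : IsMedianAlgebra m) {z c c' d d' : X} (hd : d ∈ mInterval m z c)
    (hc' : c' ∈ mInterval m z d') : m c c' d ∈ mInterval m d d' :=
  calc m d d' (m c c' d)
    _ = m d (m d d' c) c' := by rw [h.assoc, h.rotate c, h.rotate c']
    _ = m (m c d z) (m c d d') c' := by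
      rw [h.rotate c d z, h.rotate d z c, mem_mInterval.1 hd, h.rotate c d d']
    _ = m c c' d := by rw [← h.distrib, mem_mInterval.1 hc', h.right_comm]

end IsMedianAlgebra

lemma MConvex.exists_maximal_disjoint {C U : Set X} (hC : MConvex m C) (hCU : Disjoint C U) :
    ∃ D, C ⊆ D ∧ Maximal (fun D => MConvex m D ∧ Disjoint D U) D := by
  refine zorn_subset_nonempty {D | MConvex m D ∧ Disjoint D U} (fun c hc hchain _ => ?_) C
    ⟨hC, hCU⟩
  refine ⟨⋃₀ c, ⟨?_, Set.disjoint_sUnion_left.2 fun D hD => (hc hD).2⟩,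
    fun _ => Set.subset_sUnion_of_mem⟩
  rintro a ⟨A, hA, ha⟩ b ⟨B, hB, hb⟩
  obtain ⟨D, hD, hAD, hBD⟩ := hchain.directedOn A hA B hB
  exact ((hc hD).1 a (hAD ha) b (hBD hb)).trans (Set.subset_sUnion_of_mem hD)

namespace IsMedianAlgebra

lemma exists_mem_interval_of_maximal (h : IsMedianAlgebra m) {C U : Set X}
    (hmax : Maximal (fun D => MConvex m D ∧ Disjoint D U) C) (hne : C.Nonempty) {z : X}
    (hz : z ∉ C) : ∃ c ∈ C, ∃ d ∈ U, d ∈ mInterval m z c := by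
  by_contra! hd
  refine hz (hmax.le_of_ge ⟨h.convex_join z hmax.prop.1, ?_⟩ (h.subset_join z C)
    (h.mem_join z hne))
  rw [join, Set.disjoint_iUnion₂_left]
  exact fun c hc => Set.disjoint_right.2 (hd c hc)

theorem exists_convex_compl_convex (h : IsMedianAlgebra m) {V U : Set X} (hV : MConvex m V)
    (hU : MConvex m U) (hVne : V.Nonempty) (hUne : U.Nonempty) (hVU : Disjoint V U) :
    ∃ D, MConvex m D ∧ MConvex m Dᶜ ∧ V ⊆ D ∧ U ⊆ Dᶜ := by
  obtain ⟨C, hVC, hC⟩ := hV.exists_maximal_disjoint hVU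
  obtain ⟨E, hUE, hE⟩ := hU.exists_maximal_disjoint hC.prop.2.symm
  have hC' : Maximal (fun D => MConvex m D ∧ Disjoint D E) C :=
    ⟨⟨hC.prop.1, hE.prop.2.symm⟩, fun D hD => hC.2 ⟨hD.1, hD.2.mono_right hUE⟩⟩
  suffices hcompl : Cᶜ = E from ⟨C, hC.prop.1, hcompl ▸ hE.prop.1, hVC, hcompl ▸ hUE⟩
  refine (Set.compl_subset_iff_union.2 (Set.eq_univ_of_forall fun z => ?_)).antisymm
    hE.prop.2.subset_compl_right
  by_contra hz
  rw [Set.mem_union, not_or] at hz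
  obtain ⟨c, hc, d, hd, hdzc⟩ := h.exists_mem_interval_of_maximal hC' (hVne.mono hVC) hz.1
  obtain ⟨d', hd', c', hc', hczd⟩ := h.exists_mem_interval_of_maximal hE (hUne.mono hUE) hz.2
  exact hE.prop.2.le_bot ⟨hE.prop.1 d hd d' hd' (h.pasch hdzc hczd),
    hC.prop.1 c hc c' hc' (h.median_mem_interval c c' d)⟩

end IsMedianAlgebra

/-- The median of the two-element median algebra `{0, 1}`. -/
def boolMajority (x y z : Bool) : Bool := (x && y) || (y && z) || (x && z)

@[simp]
lemma boolMajority_self_left (a b : Bool) : boolMajority a a b = a := by decide +revert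

@[simp]
lemma boolMajority_self_outer (a b : Bool) : boolMajority a b a = a := by decide +revert

@[simp]
lemma boolMajority_self_right (a b : Bool) : boolMajority a b b = b := by decide +revert

lemma apply_boolMajority (σ : Bool → Bool) (a b c : Bool) :
    σ (boolMajority a b c) = boolMajority (σ a) (σ b) (σ c) := by
  decide +revert

/-- Median homomorphisms to `{0, 1}`; they correspond to the halfspaces of the median algebra,
the convex sets whose complement is convex. -/
def IsBoolHom (m : X → X → X → X) (φ : X → Bool) : Prop :=
  ∀ a b c, φ (m a b c) = boolMajority (φ a) (φ b) (φ c)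

namespace IsMedianAlgebra

open scoped Classical in
lemma isBoolHom_of_convex (h : IsMedianAlgebra m) {D : Set X} (hD : MConvex m D)
    (hDc : MConvex m Dᶜ) : IsBoolHom m (fun x => decide (x ∈ D)) := by
  intro a b c
  have two_of_three {S : Set X} (hS : MConvex m S) :
      (a ∈ S ∧ b ∈ S ∨ b ∈ S ∧ c ∈ S ∨ a ∈ S ∧ c ∈ S) → m a b c ∈ S := by
    rintro (⟨ha, hb⟩ | ⟨hb, hc⟩ | ⟨ha, hc⟩)
    · exact hS a ha b hb (h.median_mem_interval a b c)
    · exact h.rotate a b c ▸ hS b hb c hc (h.median_mem_interval b c a)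
    · exact h.right_comm a b c ▸ hS a ha c hc (h.median_mem_interval a c b)
  have hin := two_of_three hD
  have hout := two_of_three hDc
  simp only [Set.mem_compl_iff] at hout
  by_cases ha : a ∈ D <;> by_cases hb : b ∈ D <;> by_cases hc : c ∈ D <;>
    simp [ha, hb, hc, hin, hout, boolMajority]

theorem exists_isBoolHom_of_disjoint (h : IsMedianAlgebra m) {U V : Set X} (hU : MConvex m U)
    (hV : MConvex m V) (hUne : U.Nonempty) (hVne : V.Nonempty) (hUV : Disjoint U V) :
    ∃ φ, IsBoolHom m φ ∧ (∀ x ∈ U, φ x = false) ∧ ∀ x ∈ V, φ x = true := by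
  classical
  obtain ⟨D, hD, hDc, hVD, hUD⟩ := h.exists_convex_compl_convex hV hU hVne hUne hUV.symm
  exact ⟨_, h.isBoolHom_of_convex hD hDc, fun x hx => decide_eq_false (hUD hx),
    fun x hx => decide_eq_true (hVD hx)⟩

lemma exists_isBoolHom_of_ne (h : IsMedianAlgebra m) {x y : X} (hxy : x ≠ y) :
    ∃ φ, IsBoolHom m φ ∧ φ x = false ∧ φ y = true := by
  simpa using h.exists_isBoolHom_of_disjoint (h.convex_singleton x) (h.convex_singleton y)
    (Set.singleton_nonempty x) (Set.singleton_nonempty y) (Set.disjoint_singleton.2 hxy)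

lemma ext_boolHom (h : IsMedianAlgebra m) {x y : X} (hxy : ∀ φ, IsBoolHom m φ → φ x = φ y) :
    x = y := by
  by_contra hne
  obtain ⟨φ, hφ, hx, hy⟩ := h.exists_isBoolHom_of_ne hne
  exact Bool.false_ne_true (hx.symm.trans ((hxy φ hφ).trans hy))

end IsMedianAlgebra

/-- Median homomorphisms from the cube `{0,1}ⁿ`. -/
def IsCubeMap {n : ℕ} (m : X → X → X → X) (f : (Fin n → Bool) → X) : Prop :=
  ∀ x y z, f (bmed x y z) = m (f x) (f y) (f z)

section CubeSection

/-- `g` takes the constant value `c` on the face `{v | v i = b}` of the cube. -/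
def FaceConst {n : ℕ} (g : (Fin n → Bool) → Bool) (i : Fin n) (b c : Bool) : Prop :=
  ∀ v, v i = b → g v = c

variable {n : ℕ} {g : (Fin n → Bool) → Bool}

lemma FaceConst.eq_of_ne {i j : Fin n} {b b' c c' : Bool} (h : FaceConst g i b c)
    (h' : FaceConst g j b' c') (hij : i ≠ j) : c = c' := by
  let v := Function.update (fun _ => b') i b
  rw [← h v (Function.update_self ..), h' v (Function.update_of_ne hij.symm ..)]

lemma FaceConst.unique {i : Fin n} {b c c' : Bool} (h : FaceConst g i b c)
    (h' : FaceConst g i b c') : c = c' :=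
  (h (fun _ => b) rfl).symm.trans (h' (fun _ => b) rfl)

lemma not_faceConst_of_ne {i k : Fin n} {σ : Bool → Bool} (hσ : ∀ b, FaceConst g i b (σ b))
    (hne : σ false ≠ σ true) (hk : k ≠ i) (b c : Bool) : ¬ FaceConst g k b c :=
  fun h => hne <| ((hσ false).eq_of_ne h hk.symm).trans ((hσ true).eq_of_ne h hk.symm).symm

lemma faceConst_dichotomy (g : (Fin n → Bool) → Bool) :
    (∃ c, ∀ k b d, FaceConst g k b d → d = c) ∨
      ∃ (i : Fin n) (σ : Bool → Bool), σ false ≠ σ true ∧ ∀ b, FaceConst g i b (σ b) := by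
  by_cases hfalse : ∀ k b, ¬ FaceConst g k b false
  · exact .inl ⟨true, fun k b d hd => by cases d <;> [exact absurd hd (hfalse k b); rfl]⟩
  by_cases htrue : ∀ k b, ¬ FaceConst g k b true
  · exact .inl ⟨false, fun k b d hd => by cases d <;> [rfl; exact absurd hd (htrue k b)]⟩
  push Not at hfalse htrue
  obtain ⟨i, b, hi⟩ := hfalse
  obtain ⟨j, b', hj⟩ := htrue
  obtain rfl : i = j := by_contra fun hij => Bool.false_ne_true (hi.eq_of_ne hj hij)
  obtain rfl : b' = !b :=
    Bool.eq_not.2 fun hbb => Bool.false_ne_true (hi.unique (hbb ▸ hj))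
  refine .inr ⟨i, fun d => d ^^ b, by simp, fun d => ?_⟩
  cases b <;> cases d <;> assumption

lemma apply_foldr_eq {α : Type*} {G : α → X → X} {φ : X → Bool} {c : Bool} {L : List α} {x : X}
    (hG : ∀ k ∈ L, (∀ x, φ (G k x) = c) ∨ ∀ x, φ (G k x) = φ x)
    (h : φ x = c ∨ ∃ k ∈ L, ∀ x, φ (G k x) = c) : φ (L.foldr G x) = c := by
  induction L with
  | nil => simpa using h
  | cons a L ih =>
    rw [List.foldr_cons]
    rcases hG a List.mem_cons_self with ha | ha
    · exact ha _
    by_cases hx : φ x = c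
    · exact (ha _).trans (ih (fun k hk => hG k (List.mem_cons_of_mem a hk)) (.inl hx))
    obtain ⟨k, hk, hkc⟩ := h.resolve_left hx
    rcases List.mem_cons.1 hk with rfl | hkL
    · exact hkc _
    · exact (ha _).trans (ih (fun k hk => hG k (List.mem_cons_of_mem a hk)) (.inr ⟨k, hkL, hkc⟩))

-- `G` is the gate map onto the convex hull of `S`.
lemma exists_gate (m : X → X → X → X) {S : Finset X} (hS : S.Nonempty) :
    ∃ G : X → X, ∀ φ, IsBoolHom m φ →
      (∃ c, (∀ y ∈ S, φ y = c) ∧ ∀ x, φ (G x) = c) ∨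
        (∀ c, ∃ y ∈ S, φ y = c) ∧ ∀ x, φ (G x) = φ x := by
  induction hS using Finset.Nonempty.cons_induction with
  | singleton a => exact ⟨fun _ => a, fun φ _ => .inl ⟨φ a, by simp, fun _ => rfl⟩⟩
  | cons b S hb hS ih =>
    obtain ⟨G, hG⟩ := ih
    refine ⟨fun x => m x b (G x), fun φ hφ => ?_⟩
    simp only [hφ _ _ _, Finset.mem_cons, forall_eq_or_imp, exists_eq_or_imp]
    rcases hG φ hφ with ⟨c, hc, hGc⟩ | ⟨hS', hGφ⟩
    · simp only [hGc]
      rcases eq_or_ne (φ b) c with rfl | hbc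
      · exact .inl ⟨φ b, ⟨rfl, hc⟩, fun x => boolMajority_self_right ..⟩
      · obtain ⟨s, hs⟩ := hS
        obtain hbc := Bool.eq_not.2 hbc
        refine .inr ⟨fun d => ?_, fun x => ?_⟩
        · rcases eq_or_ne d c with rfl | hd
          · exact .inr ⟨s, hs, hc s hs⟩
          · exact .inl (hbc.trans (Bool.eq_not.2 hd).symm)
        · rw [hbc]
          cases c <;> simp [boolMajority]
    · exact .inr ⟨fun c => .inr (hS' c), fun x => by rw [hGφ, boolMajority_self_outer]⟩

lemma exists_face_gates (m : X → X → X → X) (p : (Fin n → Bool) → X) :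
    ∃ G : Fin n → Bool → X → X, ∀ φ, IsBoolHom m φ → ∀ i b,
      (∃ c, FaceConst (φ ∘ p) i b c ∧ ∀ x, φ (G i b x) = c) ∨
        (∀ c, ¬ FaceConst (φ ∘ p) i b c) ∧ ∀ x, φ (G i b x) = φ x := by
  classical
  have face_gate (i : Fin n) (b : Bool) := exists_gate m (S := Finset.image p {v | v i = b})
    ⟨p fun _ => b, Finset.mem_image_of_mem p (by simp)⟩
  choose G hG using face_gate
  refine ⟨G, fun φ hφ i b => ?_⟩
  refine (hG i b φ hφ).imp (fun ⟨c, hc, hGc⟩ => ⟨c, fun v hv => ?_, hGc⟩)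
    (fun ⟨hS, hGφ⟩ => ⟨fun c hc => ?_, hGφ⟩)
  · exact hc _ (Finset.mem_image_of_mem p (by simp [hv]))
  · obtain ⟨_, hy, hyc⟩ := hS (!c)
    obtain ⟨v, hv, rfl⟩ := Finset.mem_image.1 hy
    exact Bool.not_ne_self c (hyc.symm.trans (hc v (by simpa using hv)))

-- Every homomorphism is made constant, equal to a coordinate, or equal to a negated coordinate
-- on the cube by projecting successively to the gates of the faces through `w`.
theorem IsMedianAlgebra.exists_cube_map (h : IsMedianAlgebra m) (p : (Fin n → Bool) → X) :
    ∃ f, IsCubeMap m f ∧ ∀ φ, IsBoolHom m φ → ∀ i (σ : Bool → Bool), σ false ≠ σ true →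
      (∀ b, FaceConst (φ ∘ p) i b (σ b)) → ∀ v, φ (f v) = σ (v i) := by
  obtain ⟨G, hG⟩ := exists_face_gates m p
  let base := (Finset.univ : Finset (Fin n × Bool)).toList.foldr (fun k => G k.1 k.2)
    (p fun _ => false)
  let f (w : Fin n → Bool) := (List.finRange n).foldr (fun k => G k (w k)) base
  have apply_of_faces φ (hφ : IsBoolHom m φ) i (σ : Bool → Bool) (hσ : σ false ≠ σ true)
      (hi : ∀ b, FaceConst (φ ∘ p) i b (σ b)) v : φ (f v) = σ (v i) := by
    have hGi (x) : φ (G i (v i) x) = σ (v i) := by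
      obtain ⟨c, hc, hGc⟩ := (hG φ hφ i (v i)).resolve_right fun H => H.1 _ (hi _)
      rw [hGc, hc.unique (hi _)]
    refine apply_foldr_eq (fun k _ => ?_) (.inr ⟨i, List.mem_finRange i, hGi⟩)
    rcases eq_or_ne k i with rfl | hk
    · exact .inl hGi
    · exact .inr ((hG φ hφ k (v k)).resolve_left
        fun ⟨c, hc, _⟩ => not_faceConst_of_ne hi hσ hk _ _ hc).2
  refine ⟨f, fun x y z => h.ext_boolHom fun φ hφ => ?_, apply_of_faces⟩
  rw [hφ]
  rcases faceConst_dichotomy (φ ∘ p) with ⟨c, hc⟩ | ⟨i, σ, hσ, hi⟩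
  · have hbase k b d (hd : FaceConst (φ ∘ p) k b d) : φ base = d := by
      obtain rfl := hc k b d hd
      refine apply_foldr_eq (fun k' _ => ?_) (.inr ⟨(k, b), by simp, ?_⟩)
      · exact (hG φ hφ k'.1 k'.2).imp (fun ⟨c', hc', hG'⟩ => hc _ _ _ hc' ▸ hG') And.right
      · obtain ⟨c', hc', hG'⟩ := (hG φ hφ k b).resolve_right fun H => H.1 _ hd
        exact hc _ _ _ hc' ▸ hG'
    have hf w : φ (f w) = φ base :=
      apply_foldr_eq (fun k _ => (hG φ hφ k (w k)).imp
        (fun ⟨c', hc', hG'⟩ => hbase _ _ _ hc' ▸ hG') And.right) (.inl rfl)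
    simp only [hf, boolMajority_self_left]
  · simp only [apply_of_faces φ hφ i σ hσ hi, ← apply_boolMajority]
    rfl

theorem IsMedianAlgebra.exists_median_section (h : IsMedianAlgebra m) {Θ : X → Fin n → Bool}
    (hΘ : ∀ i, IsBoolHom m (Θ · i)) (hsurj : Function.Surjective Θ) :
    ∃ f, IsCubeMap m f ∧ Function.RightInverse f Θ := by
  obtain ⟨p, hp⟩ := hsurj.hasRightInverse
  obtain ⟨f, hf, hfσ⟩ := h.exists_cube_map p
  refine ⟨f, hf, fun v => funext fun i => ?_⟩
  exact hfσ _ (hΘ i) i id Bool.false_ne_true (fun b w hw => by simp [hp w, hw]) v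

end CubeSection

section Rank

/-- The rank of the median `m` is less than `n`. -/
def RankLT (m : X → X → X → X) (n : ℕ) : Prop :=
  ∀ N (f : (Fin N → Bool) → X), Function.Injective f → IsCubeMap m f → N < n

lemma RankLT.lt_of_surjective {n N : ℕ} (hr : RankLT m n) (h : IsMedianAlgebra m)
    {Θ : X → Fin N → Bool} (hΘ : ∀ i, IsBoolHom m (Θ · i)) (hsurj : Function.Surjective Θ) :
    N < n :=
  let ⟨f, hf, hfΘ⟩ := h.exists_median_section hΘ hsurj
  hr N f hfΘ.injective hf

/-- The neighbour of the vertex `⊥` of the cube along the coordinate `i`. -/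
def axisVertex {n : ℕ} (i : Fin n) : Fin n → Bool := fun j => decide (j = i)

lemma bot_ne_axisVertex {n : ℕ} (i : Fin n) : (⊥ : Fin n → Bool) ≠ axisVertex i :=
  fun h => by simpa [axisVertex] using congrFun h i

lemma bmed_bot_axisVertex {n : ℕ} (i : Fin n) (v : Fin n → Bool) :
    bmed ⊥ (axisVertex i) v = bif v i then axisVertex i else ⊥ := by
  ext j
  rcases eq_or_ne j i with rfl | hj
  · cases h : v j <;> simp [bmed, axisVertex, h]
  · cases h : v i <;> simp [bmed, axisVertex, hj]

namespace IsCubeMap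

variable {n : ℕ} {f : (Fin n → Bool) → X}

lemma median_bot_axisVertex (hf : IsCubeMap m f) (i : Fin n) (v : Fin n → Bool) :
    m (f ⊥) (f (axisVertex i)) (f v) = f (bif v i then axisVertex i else ⊥) := by
  rw [← hf, bmed_bot_axisVertex]

lemma boolHom_apply (hf : IsCubeMap m f) {φ : X → Bool} (hφ : IsBoolHom m φ) {i : Fin n}
    (hbot : φ (f ⊥) = false) (haxis : φ (f (axisVertex i)) = true) (v : Fin n → Bool) :
    φ (f v) = v i := by
  have key := congrArg φ (hf.median_bot_axisVertex i v)
  rw [hφ, hbot, haxis] at key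
  cases h : v i <;> simpa [h, hbot, haxis, boolMajority] using key

end IsCubeMap

end Rank

end MedianAlgebra

/-! ### Dimension is at most rank -/

section SepDim

variable {X Y : Type u} [TopologicalSpace X] [TopologicalSpace Y]

lemma SepDimLE.of_injective {n : ℕ} {f : Y → X} (hf : Continuous f) (hinj : Function.Injective f)
    (h : SepDimLE n X) : SepDimLE n Y := by
  induction n generalizing X Y with
  | zero => exact ⟨fun y => h.false (f y)⟩
  | succ n ih =>
    intro x y hxy
    obtain ⟨A, B, hA, hB, hxB, hyA, hAB, hdim⟩ := h (f x) (f y) (hinj.ne hxy)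
    refine ⟨f ⁻¹' A, f ⁻¹' B, hA.preimage hf, hB.preimage hf, hxB, hyA, ?_, ?_⟩
    · rw [← Set.preimage_union, hAB, Set.preimage_univ]
    · exact ih (hf.restrictPreimage (s := A ∩ B)) (hinj.restrictPreimage _) hdim

end SepDim

/-- A continuous median with a basis of convex neighbourhoods at every point. -/
structure IsLocallyConvexMedian {X : Type*} [TopologicalSpace X] (m : X → X → X → X) : Prop where
  isMedianAlgebra : IsMedianAlgebra m
  continuous : Continuous fun p : X × X × X => m p.1 p.2.1 p.2.2
  locallyConvex : ∀ x : X, ∀ U ∈ nhds x, ∃ V ∈ nhds x, V ⊆ U ∧ MConvex m V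

/-- The wall of the halfspace `φ`: the common boundary of `φ` and its complement. -/
def wall {X : Type*} [TopologicalSpace X] (φ : X → Bool) : Set X :=
  closure (φ ⁻¹' {false}) ∩ closure (φ ⁻¹' {true})

namespace IsLocallyConvexMedian

section

variable {X : Type*} [TopologicalSpace X] {m : X → X → X → X}

lemma continuous_right (h : IsLocallyConvexMedian m) (a b : X) : Continuous (m a b) :=
  h.continuous.comp (by fun_prop : Continuous fun x => (a, b, x))

lemma restrict (h : IsLocallyConvexMedian m) {S : Set X}
    (hS : ∀ a ∈ S, ∀ b ∈ S, ∀ c ∈ S, m a b c ∈ S) :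
    IsLocallyConvexMedian fun a b c : S => (⟨m a b c, hS a a.2 b b.2 c c.2⟩ : S) where
  isMedianAlgebra :=
    ⟨fun _ _ _ => Subtype.ext (h.isMedianAlgebra.left_comm ..),
      fun _ _ _ => Subtype.ext (h.isMedianAlgebra.rotate ..),
      fun _ _ => Subtype.ext (h.isMedianAlgebra.self_left ..),
      fun _ _ _ _ _ => Subtype.ext (h.isMedianAlgebra.distrib ..)⟩
  continuous := by
    refine Continuous.subtype_mk (h.continuous.comp (?_ : Continuous fun p : S × S × S =>
      ((p.1 : X), (p.2.1 : X), (p.2.2 : X)))) _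
    fun_prop
  locallyConvex x U hU := by
    obtain ⟨W, hW, hWU⟩ := mem_nhds_subtype S x U |>.1 hU
    obtain ⟨V, hV, hVW, hVc⟩ := h.locallyConvex x W hW
    exact ⟨Subtype.val ⁻¹' V, preimage_coe_mem_nhds_subtype.2 (mem_nhdsWithin_of_mem_nhds hV),
      (Set.preimage_mono hVW).trans hWU,
      fun a ha b hb c hc => hVc _ ha _ hb (congrArg Subtype.val hc)⟩

lemma exists_isBoolHom_eventually [T2Space X] (h : IsLocallyConvexMedian m) {x y : X}
    (hxy : x ≠ y) : ∃ φ, IsBoolHom m φ ∧ (∀ᶠ z in nhds x, φ z = false) ∧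
      ∀ᶠ z in nhds y, φ z = true := by
  obtain ⟨U, V, hU, hV, hxU, hyV, hUV⟩ := t2_separation hxy
  obtain ⟨U', hU', hU'U, hU'c⟩ := h.locallyConvex x U (hU.mem_nhds hxU)
  obtain ⟨V', hV', hV'V, hV'c⟩ := h.locallyConvex y V (hV.mem_nhds hyV)
  obtain ⟨φ, hφ, hφx, hφy⟩ := h.isMedianAlgebra.exists_isBoolHom_of_disjoint hU'c hV'c
    ⟨x, mem_of_mem_nhds hU'⟩ ⟨y, mem_of_mem_nhds hV'⟩ (hUV.mono hU'U hV'V)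
  exact ⟨φ, hφ, Filter.mem_of_superset hU' hφx, Filter.mem_of_superset hV' hφy⟩

lemma median_mem_closure (h : IsLocallyConvexMedian m) {φ : X → Bool} (hφ : IsBoolHom m φ)
    {c : Bool} {x y : X} (hx : x ∈ closure (φ ⁻¹' {c})) (hy : y ∈ closure (φ ⁻¹' {c})) (z : X) :
    m x y z ∈ closure (φ ⁻¹' {c}) := by
  have hcont : Continuous (Function.uncurry fun a b => m a b z) :=
    h.continuous.comp (by fun_prop : Continuous fun p : X × X => (p.1, p.2, z))
  refine map_mem_closure₂ (f := fun a b => m a b z) hcont hx hy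
    fun a (ha : φ a = c) b (hb : φ b = c) => ?_
  rw [Set.mem_preimage, hφ, ha, hb, boolMajority_self_left, Set.mem_singleton_iff]

lemma median_mem_wall (h : IsLocallyConvexMedian m) {φ : X → Bool} (hφ : IsBoolHom m φ)
    {x y : X} (hx : x ∈ wall φ) (hy : y ∈ wall φ) (z : X) : m x y z ∈ wall φ :=
  ⟨h.median_mem_closure hφ hx.1 hy.1 z, h.median_mem_closure hφ hx.2 hy.2 z⟩

lemma exists_isBoolHom_eventually_cube [T2Space X] (h : IsLocallyConvexMedian m) {n : ℕ}
    {f : (Fin n → Bool) → X} (hinj : Function.Injective f) (hf : IsCubeMap m f) (i : Fin n) :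
    ∃ ψ, IsBoolHom m ψ ∧ ∀ v, ∀ᶠ z in nhds (f v), ψ z = v i := by
  obtain ⟨ψ, hψ, hbot, haxis⟩ := h.exists_isBoolHom_eventually (hinj.ne (bot_ne_axisVertex i))
  refine ⟨ψ, hψ, fun v => ?_⟩
  have hproj := (h.continuous_right (f ⊥) (f (axisVertex i))).tendsto (f v)
  rw [hf.median_bot_axisVertex] at hproj
  have hev : ∀ᶠ z in nhds (f (bif v i then axisVertex i else ⊥)), ψ z = v i := by
    cases v i <;> assumption
  filter_upwards [hproj.eventually hev] with z hz
  rw [hψ, hbot.self_of_nhds, haxis.self_of_nhds] at hz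
  simpa [boolMajority] using hz

-- A cube in the wall is a face of a cube of `X`, whose additional coordinate is `φ`.
lemma rankLT_wall [T2Space X] (h : IsLocallyConvexMedian m) {n : ℕ} (hr : RankLT m (n + 1))
    {φ : X → Bool} (hφ : IsBoolHom m φ) {N : ℕ} {f : (Fin N → Bool) → X}
    (hinj : Function.Injective f) (hf : IsCubeMap m f) (hwall : ∀ v, f v ∈ wall φ) : N < n := by
  choose ψ hψ hψf using h.exists_isBoolHom_eventually_cube hinj hf
  let Θ (x : X) : Fin (N + 1) → Bool := Fin.cons (φ x) (ψ · x)
  have hΘ (i) : IsBoolHom m (Θ · i) := by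
    cases i using Fin.cases with
    | zero => exact hφ
    | succ i => exact hψ i
  refine Nat.lt_of_succ_lt_succ (hr.lt_of_surjective h.isMedianAlgebra hΘ fun v => ?_)
  have hclosure : f (Fin.tail v) ∈ closure (φ ⁻¹' {v 0}) := by
    cases v 0
    · exact (hwall _).1
    · exact (hwall _).2
  have hψ_near : ∀ᶠ z in nhds (f (Fin.tail v)), ∀ i, ψ i z = Fin.tail v i :=
    Filter.eventually_all.2 fun i => hψf i _
  obtain ⟨z, hφz, hψz⟩ :=
    ((mem_closure_iff_frequently.1 hclosure).and_eventually hψ_near).exists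
  refine ⟨z, ?_⟩
  rw [← Fin.cons_self_tail v, ← funext hψz, ← (hφz : φ z = v 0)]

end

lemma notMem_closure_of_eventually {X : Type*} [TopologicalSpace X] {φ : X → Bool} {x : X}
    {c d : Bool} (hcd : c ≠ d) (hx : ∀ᶠ z in nhds x, φ z = c) : x ∉ closure (φ ⁻¹' {d}) :=
  fun hmem =>
    let ⟨_, hz, hz'⟩ := ((mem_closure_iff_frequently.1 hmem).and_eventually hx).exists
    hcd (hz'.symm.trans hz)

theorem sepDimLE_of_rankLT {X : Type u} [TopologicalSpace X] [T2Space X] {m : X → X → X → X}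
    (h : IsLocallyConvexMedian m) {n : ℕ} (hr : RankLT m n) : SepDimLE n X := by
  induction n generalizing X with
  | zero =>
    refine ⟨fun x => (hr 0 (fun _ => x) (Function.injective_of_subsingleton _) ?_).false⟩
    exact fun _ _ _ => (h.isMedianAlgebra.self_left x x).symm
  | succ n ih =>
    intro x y hxy
    obtain ⟨φ, hφ, hx, hy⟩ := h.exists_isBoolHom_eventually hxy
    refine ⟨closure (φ ⁻¹' {false}), closure (φ ⁻¹' {true}), isClosed_closure, isClosed_closure,
      notMem_closure_of_eventually Bool.false_ne_true hx,
      notMem_closure_of_eventually Bool.false_ne_true.symm hy,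
      Set.eq_univ_of_forall fun z => ?_, ?_⟩
    · cases hz : φ z
      · exact .inl (subset_closure hz)
      · exact .inr (subset_closure hz)
    · refine ih (h.restrict fun a ha b hb c _ => h.median_mem_wall hφ ha hb c)
        fun N f hinj hf => ?_
      exact h.rankLT_wall hr hφ (Subtype.val_injective.comp hinj)
        (fun x y z => congrArg Subtype.val (hf x y z)) fun v => (f v).2

end IsLocallyConvexMedian

/-! ### The Poincaré–Miranda theorem -/

section DiscreteMiranda

variable {ι : Type*} [DecidableEq ι]

/-- Cubical cochains modulo 2 of the grid `ι → ℕ`: `E S x` is the value of `E` on the cube with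
smallest vertex `x` that extends by one unit in the directions of `S`. -/
abbrev Cochain (ι : Type*) := Finset ι → (ι → ℕ) → ZMod 2

/-- The cubical coboundary modulo 2: the sum of a cochain over the faces of a cube. -/
def coboundary (E : Cochain ι) : Cochain ι := fun S x =>
  ∑ i ∈ S, (E (S.erase i) x + E (S.erase i) (x + Pi.single i 1))

/-- The cup product of the coboundaries of the functions `s j` for `j ∈ l`, written as an iterated
coboundary. -/
def cupCoboundaries (s : ι → (ι → ℕ) → ZMod 2) : List ι → Cochain ι
  | [] => fun _ _ => 1
  | j :: l => coboundary fun S x => s j x * cupCoboundaries s l S x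

/-- The vertices of the cube with smallest vertex `x` and directions `S`. -/
def gridCube (S : Finset ι) (x : ι → ℕ) : Set (ι → ℕ) := Set.Icc x (x + ∑ i ∈ S, Pi.single i 1)

lemma sum_offDiag_eq_zero_of_symm (S : Finset ι) (H : ι → ι → ZMod 2)
    (hH : ∀ i j, H i j = H j i) : ∑ i ∈ S, ∑ j ∈ S.erase i, H i j = 0 := by
  rw [Finset.sum_sigma']
  refine Finset.sum_involution (fun p _ => ⟨p.2, p.1⟩) (fun p _ => ?_) (fun p hp _ h => ?_)
    (fun p hp => ?_) (fun _ _ => rfl)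
  · rw [hH p.2 p.1, CharTwo.add_self_eq_zero]
  · exact Finset.ne_of_mem_erase (Finset.mem_sigma.1 hp).2 (congrArg Sigma.fst h)
  · simp only [Finset.mem_sigma, Finset.mem_erase] at hp ⊢
    exact ⟨hp.2.2, hp.2.1.symm, hp.1⟩

lemma coboundary_coboundary (E : Cochain ι) : coboundary (coboundary E) = 0 := by
  ext S x
  simp only [coboundary, ← Finset.sum_add_distrib]
  refine sum_offDiag_eq_zero_of_symm S (fun i j => _) fun i j => ?_
  rw [Finset.erase_right_comm, add_right_comm x (Pi.single i 1) (Pi.single j 1)]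
  ring

lemma coboundary_cupCoboundaries (s : ι → (ι → ℕ) → ZMod 2) (l : List ι) :
    coboundary (cupCoboundaries s l) = 0 := by
  cases l with
  | nil =>
    ext S x
    exact Finset.sum_eq_zero fun i _ => CharTwo.add_self_eq_zero _
  | cons j l => exact coboundary_coboundary _

lemma left_mem_gridCube (S : Finset ι) (x : ι → ℕ) : x ∈ gridCube S x :=
  ⟨le_rfl, le_self_add⟩

lemma gridCube_erase_subset (S : Finset ι) (i : ι) (x : ι → ℕ) :
    gridCube (S.erase i) x ⊆ gridCube S x :=
  Set.Icc_subset_Icc_right (by gcongr; exact Finset.erase_subset i S)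

lemma gridCube_erase_add_subset {S : Finset ι} {i : ι} (hi : i ∈ S) (x : ι → ℕ) :
    gridCube (S.erase i) (x + Pi.single i 1) ⊆ gridCube S x := by
  refine Set.Icc_subset_Icc le_self_add ?_
  rw [add_assoc, Finset.add_sum_erase S (fun i => (Pi.single i 1 : ι → ℕ)) hi]

lemma apply_eq_of_mem_gridCube_erase {S : Finset ι} {i : ι} {x y : ι → ℕ}
    (hy : y ∈ gridCube (S.erase i) x) : y i = x i := by
  have hsum : (∑ j ∈ S.erase i, (Pi.single j 1 : ι → ℕ)) i = 0 := by
    rw [Finset.sum_apply]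
    exact Finset.sum_eq_zero fun j hj => Pi.single_eq_of_ne (Finset.ne_of_mem_erase hj).symm 1
  have := hy.2 i
  rw [Pi.add_apply, hsum, add_zero] at this
  exact this.antisymm (hy.1 i)

lemma cupCoboundaries_eq_zero {s : ι → (ι → ℕ) → ZMod 2} {l : List ι} {S : Finset ι} {x : ι → ℕ}
    {j : ι} (hj : j ∈ l) {c : ZMod 2} (hc : ∀ y ∈ gridCube S x, s j y = c) :
    cupCoboundaries s l S x = 0 := by
  induction l generalizing S x with
  | nil => exact absurd hj List.not_mem_nil
  | cons k l ih =>
    by_cases hjl : j ∈ l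
    · refine Finset.sum_eq_zero fun i hi => ?_
      beta_reduce
      rw [ih hjl fun y hy => hc y (gridCube_erase_subset S i x hy),
        ih hjl fun y hy => hc y (gridCube_erase_add_subset hi x hy), mul_zero, mul_zero, add_zero]
    obtain rfl : j = k := (List.mem_cons.1 hj).resolve_right hjl
    have hfactor (i) (hi : i ∈ S) : s j x * cupCoboundaries s l (S.erase i) x +
        s j (x + Pi.single i 1) * cupCoboundaries s l (S.erase i) (x + Pi.single i 1) =
        c * (cupCoboundaries s l (S.erase i) x +
          cupCoboundaries s l (S.erase i) (x + Pi.single i 1)) := by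
      rw [hc x (left_mem_gridCube S x), hc _ (gridCube_erase_add_subset hi x
        (left_mem_gridCube _ _)), mul_add]
    calc cupCoboundaries s (j :: l) S x
      _ = c * coboundary (cupCoboundaries s l) S x :=
        (Finset.sum_congr rfl hfactor).trans (Finset.mul_sum ..).symm
      _ = 0 := by rw [coboundary_cupCoboundaries, Pi.zero_apply, Pi.zero_apply, mul_zero]

variable [Fintype ι]

lemma sum_piFinset_eq_sum_update {M : Type*} [AddCommMonoid M] (T : ι → Finset ℕ) (i : ι)
    (G : (ι → ℕ) → M) : ∑ x ∈ Fintype.piFinset T, G x =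
      ∑ a ∈ T i, ∑ x ∈ Fintype.piFinset (Function.update T i {a}), G x := by
  rw [← Finset.sum_fiberwise_of_maps_to (g := fun x => x i) (t := T i)
    fun x hx => Fintype.mem_piFinset.1 hx i]
  refine Finset.sum_congr rfl fun a ha => ?_
  rw [Fintype.piFinset_update_singleton_eq_filter_piFinset_eq T i ha]

lemma mem_piFinset_update_singleton {T : ι → Finset ℕ} {i : ι} {a : ℕ} {x : ι → ℕ} :
    x ∈ Fintype.piFinset (Function.update T i {a}) ↔ x i = a ∧ ∀ k ≠ i, x k ∈ T k := by
  rw [Fintype.mem_piFinset, Function.forall_update_iff T fun k U => x k ∈ U,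
    Finset.mem_singleton]

lemma sum_piFinset_update_add_single {M : Type*} [AddCommMonoid M] (T : ι → Finset ℕ) (i : ι)
    (a : ℕ) (G : (ι → ℕ) → M) :
    ∑ x ∈ Fintype.piFinset (Function.update T i {a}), G (x + Pi.single i 1) =
      ∑ x ∈ Fintype.piFinset (Function.update T i {a + 1}), G x := by
  refine Finset.sum_nbij' (· + Pi.single i 1) (· - Pi.single i 1) (fun x hx => ?_)
    (fun x hx => ?_) (fun x _ => add_tsub_cancel_right ..) (fun x hx => ?_) (fun _ _ => rfl)
  all_goals rw [mem_piFinset_update_singleton] at hx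
  · rw [mem_piFinset_update_singleton]
    exact ⟨by simp [hx.1], fun k hk => by simpa [hk] using hx.2 k hk⟩
  · rw [mem_piFinset_update_singleton]
    exact ⟨by simp [hx.1], fun k hk => by simpa [hk] using hx.2 k hk⟩
  · refine tsub_add_cancel_of_le fun k => ?_
    rcases eq_or_ne k i with rfl | hk
    · simp [hx.1]
    · simp [hk]

lemma sum_range_add_succ_eq (N : ℕ) (h : ℕ → ZMod 2) :
    ∑ a ∈ Finset.range N, (h a + h (a + 1)) = h 0 + h N := by
  simpa only [CharTwo.sub_eq_add, add_comm] using Finset.sum_range_sub h N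

lemma sum_coboundary {N : ℕ} (E : Cochain ι) {S : Finset ι} {T : ι → Finset ℕ}
    (hT : ∀ i ∈ S, T i = Finset.range N) :
    ∑ x ∈ Fintype.piFinset T, coboundary E S x =
      ∑ i ∈ S, (∑ x ∈ Fintype.piFinset (Function.update T i {0}), E (S.erase i) x +
        ∑ x ∈ Fintype.piFinset (Function.update T i {N}), E (S.erase i) x) := by
  simp only [coboundary]
  rw [Finset.sum_comm]
  refine Finset.sum_congr rfl fun i hi => ?_
  rw [sum_piFinset_eq_sum_update T i, hT i hi]
  simp only [Finset.sum_add_distrib, sum_piFinset_update_add_single]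
  rw [← Finset.sum_add_distrib]
  exact sum_range_add_succ_eq N fun a =>
    ∑ x ∈ Fintype.piFinset (Function.update T i {a}), E (S.erase i) x

lemma sum_side_eq_zero {s : ι → (ι → ℕ) → ZMod 2} {l : List ι} {i : ι} (hi : i ∈ l) {a : ℕ}
    {c : ZMod 2} (hac : ∀ x : ι → ℕ, x i = a → s i x = c) (j : ι) (S : Finset ι)
    (T : ι → Finset ℕ) : ∑ x ∈ Fintype.piFinset (Function.update T i {a}),
      s j x * cupCoboundaries s l (S.erase i) x = 0 := by
  refine Finset.sum_eq_zero fun x hx => ?_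
  rw [cupCoboundaries_eq_zero hi fun y hy => hac y ?_, mul_zero]
  rw [apply_eq_of_mem_gridCube_erase hy, (mem_piFinset_update_singleton.1 hx).1]

-- By `sum_coboundary`, which is Stokes' theorem on a box, the sum localises to the side `x j = N`,
-- where `s j = 1`.
lemma sum_cupCoboundaries_eq_one {N : ℕ} {s : ι → (ι → ℕ) → ZMod 2}
    (hzero : ∀ i x, x i = 0 → s i x = 0) (hone : ∀ i x, x i = N → s i x = 1) {l : List ι}
    (hl : l.Nodup) {T : ι → Finset ℕ} (hT : ∀ i ∈ l, T i = Finset.range N)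
    (hT' : ∀ i ∉ l, (T i).card = 1) :
    ∑ x ∈ Fintype.piFinset T, cupCoboundaries s l l.toFinset x = 1 := by
  induction l generalizing T with
  | nil =>
    have hcard : (Fintype.piFinset T).card = 1 := by
      rw [Fintype.card_piFinset, Finset.prod_eq_one fun i _ => hT' i List.not_mem_nil]
    simp [cupCoboundaries, hcard]
  | cons j l ih =>
    rw [List.nodup_cons] at hl
    have herase : (j :: l).toFinset.erase j = l.toFinset := by
      rw [List.toFinset_cons, Finset.erase_insert (by simpa using hl.1)]
    rw [cupCoboundaries, sum_coboundary _ fun i hi => hT i (List.mem_toFinset.1 hi),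
      Finset.sum_eq_single_of_mem j (by simp), herase]
    · have hlower : ∑ x ∈ Fintype.piFinset (Function.update T j {0}),
          s j x * cupCoboundaries s l l.toFinset x = 0 := Finset.sum_eq_zero fun x hx => by
        rw [hzero j x (mem_piFinset_update_singleton.1 hx).1, zero_mul]
      have hupper : ∑ x ∈ Fintype.piFinset (Function.update T j {N}),
          s j x * cupCoboundaries s l l.toFinset x =
          ∑ x ∈ Fintype.piFinset (Function.update T j {N}), cupCoboundaries s l l.toFinset x :=
        Finset.sum_congr rfl fun x hx => by
          rw [hone j x (mem_piFinset_update_singleton.1 hx).1, one_mul]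
      rw [hlower, zero_add, hupper]
      refine ih hl.2 (fun i hi => ?_) (fun i hi => ?_)
      · rw [Function.update_of_ne (ne_of_mem_of_not_mem hi hl.1), hT i (List.mem_cons_of_mem j hi)]
      · rcases eq_or_ne i j with rfl | hij
        · rw [Function.update_self, Finset.card_singleton]
        · rw [Function.update_of_ne hij, hT' i (by simp [hij, hi])]
    · intro i hi hij
      have hil : i ∈ l := (List.mem_cons.1 (List.mem_toFinset.1 hi)).resolve_left hij
      rw [sum_side_eq_zero hil (hzero i), sum_side_eq_zero hil (hone i), add_zero]

end DiscreteMiranda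

-- A cube on which some `s i` is constant does not contribute to the total, which is odd.
theorem exists_Icc_forall_exists_apply_eq {ι : Type*} [Finite ι] {N : ℕ}
    {s : ι → (ι → ℕ) → ZMod 2} (hzero : ∀ i x, x i = 0 → s i x = 0)
    (hone : ∀ i x, x i = N → s i x = 1) :
    ∃ x : ι → ℕ, ∀ i c, ∃ y ∈ Set.Icc x (x + 1), s i y = c := by
  classical
  cases nonempty_fintype ι
  have htotal : ∑ x ∈ Fintype.piFinset fun _ => Finset.range N,
      cupCoboundaries s Finset.univ.toList Finset.univ x = 1 := by
    simpa only [Finset.toList_toFinset] using sum_cupCoboundaries_eq_one hzero hone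
      (Finset.nodup_toList Finset.univ) (T := fun _ => Finset.range N) (fun _ _ => rfl) (by simp)
  obtain ⟨x, -, hx⟩ := Finset.exists_ne_zero_of_sum_ne_zero (htotal.trans_ne one_ne_zero)
  refine ⟨x, fun i c => by_contra fun hcon => hx ?_⟩
  refine cupCoboundaries_eq_zero (j := i) (by simp) (c := c + 1) fun y hy => ?_
  have hsum : ∑ i, (Pi.single i 1 : ι → ℕ) = 1 := Finset.univ_sum_single (1 : ι → ℕ)
  rw [gridCube, hsum] at hy
  have hne : ∀ a b : ZMod 2, a ≠ b → a = b + 1 := by decide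
  exact hne _ _ fun h => hcon ⟨y, hy, h⟩

lemma exists_Icc_forall_exists_sign {ι : Type*} [Finite ι] {N : ℕ} (hN : N ≠ 0)
    {h : ι → (ι → ℕ) → ℝ} (hlower : ∀ i x, x i = 0 → h i x ≤ 0)
    (hupper : ∀ i x, x i = N → 0 ≤ h i x) :
    ∃ x : ι → ℕ, ∀ i,
      (∃ y ∈ Set.Icc x (x + 1), h i y ≤ 0) ∧ ∃ y ∈ Set.Icc x (x + 1), 0 ≤ h i y := by
  classical
  let s (i : ι) (x : ι → ℕ) : ZMod 2 :=
    if x i = 0 then 0 else if x i = N then 1 else if h i x ≤ 0 then 0 else 1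
  have hs0 (i x) (hs : s i x = 0) : h i x ≤ 0 := by
    by_cases hx : x i = 0
    · exact hlower i x hx
    by_contra hcon
    simp [s, hx, hcon] at hs
  have hs1 (i x) (hs : s i x = 1) : 0 ≤ h i x := by
    by_cases hx : x i = N
    · exact hupper i x hx
    by_contra hcon
    simp [s, hx, (lt_of_not_ge hcon).le] at hs
  obtain ⟨x, hx⟩ := exists_Icc_forall_exists_apply_eq (N := N) (s := s)
    (fun i x hx => by simp [s, hx]) (fun i x hx => by simp [s, hx, hN])
  exact ⟨x, fun i => ⟨(hx i 0).imp fun y => And.imp_right (hs0 i y),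
    (hx i 1).imp fun y => And.imp_right (hs1 i y)⟩⟩

section Miranda

open scoped Uniformity

lemma exists_chain {J : Type*} [UniformSpace J] [PreconnectedSpace J] (a b : J)
    {V : SetRel J J} (hV : V ∈ 𝓤 J) :
    ∃ (t : ℕ → J) (N : ℕ), t 0 = a ∧ (∀ n, N ≤ n → t n = b) ∧ ∀ n, (t n, t (n + 1)) ∈ V := by
  have hchain : Relation.ReflTransGen (fun x y => (x, y) ∈ V) a b := by
    refine PreconnectedSpace.induction₂' _ (fun x => ?_) inferInstance a b
    filter_upwards [mem_nhds_left x hV, mem_nhds_right x hV] with y hxy hyx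
    exact ⟨.single hxy, .single hyx⟩
  induction hchain using Relation.ReflTransGen.head_induction_on with
  | refl => exact ⟨fun _ => b, 0, rfl, fun _ _ => rfl, fun _ => refl_mem_uniformity hV⟩
  | @head c _ hc _ ih =>
    obtain ⟨t, N, rfl, htN, ht⟩ := ih
    exact ⟨fun | 0 => c | n + 1 => t n, N + 1, rfl,
      fun | n + 1, hn => htN n (Nat.le_of_succ_le_succ hn), fun | 0 => hc | n + 1 => ht n⟩

lemma exists_pi_entourage {ι : Type*} [Finite ι] {J : ι → Type*} [∀ i, UniformSpace (J i)]
    {V : SetRel (∀ i, J i) (∀ i, J i)} (hV : V ∈ 𝓤 (∀ i, J i)) :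
    ∃ W : ∀ i, SetRel (J i) (J i), (∀ i, W i ∈ 𝓤 (J i)) ∧
      ∀ u v : ∀ i, J i, (∀ i, (u i, v i) ∈ W i) → (u, v) ∈ V := by
  rw [Pi.uniformity] at hV
  obtain ⟨T, hT, rfl⟩ := Filter.mem_iInf_of_finite _ |>.1 hV
  choose W hW hWT using fun i => Filter.mem_comap.1 (hT i)
  exact ⟨W, hW, fun u v huv => Set.mem_iInter.2 fun i => hWT i (huv i)⟩

theorem exists_eq_zero_of_pi {ι : Type*} [Finite ι] {J : ι → Type*} [∀ i, TopologicalSpace (J i)]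
    [∀ i, CompactSpace (J i)] [∀ i, R1Space (J i)] [∀ i, PreconnectedSpace (J i)]
    {a b : ∀ i, J i} {g : (∀ i, J i) → ι → ℝ} (hg : Continuous g)
    (ha : ∀ i u, u i = a i → g u i ≤ 0) (hb : ∀ i u, u i = b i → 0 ≤ g u i) :
    ∃ u, g u = 0 := by
  let _ (i) : UniformSpace (J i) := uniformSpaceOfCompactR1
  have hg_apply (i) : Continuous fun u => g u i := (continuous_apply i).comp hg
  by_contra! hne
  let U (p : ι × Bool) : Set (∀ i, J i) := bif p.2 then {u | g u p.1 < 0} else {u | 0 < g u p.1}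
  have hU_open (p) : IsOpen (U p) := match p with
    | (i, true) => isOpen_lt (hg_apply i) continuous_const
    | (i, false) => isOpen_lt continuous_const (hg_apply i)
  have hU_cover : Set.univ ⊆ ⋃ p, U p := fun u _ => by
    obtain ⟨i, hi⟩ := Function.ne_iff.1 (hne u)
    obtain hi | hi := lt_or_gt_of_ne hi
    · exact Set.mem_iUnion.2 ⟨(i, true), hi⟩
    · exact Set.mem_iUnion.2 ⟨(i, false), hi⟩
  obtain ⟨V, hV, hball⟩ := lebesgue_number_lemma isCompact_univ hU_open hU_cover
  obtain ⟨W, hW, hWV⟩ := exists_pi_entourage hV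
  choose t N ht0 htN ht using fun i => exists_chain (a i) (b i) (hW i)
  obtain ⟨M, hM⟩ := Finite.exists_le N
  let P (x : ι → ℕ) (i : ι) : J i := t i (x i)
  obtain ⟨x, hx⟩ := exists_Icc_forall_exists_sign (N := M + 1) M.succ_ne_zero
    (h := fun i x => g (P x) i) (fun i x hx => ha i _ ((congrArg (t i) hx).trans (ht0 i)))
    (fun i x hx => hb i _ (htN i _ (by rw [hx]; exact (hM i).trans M.le_succ)))
  have hPV (y) (hy : y ∈ Set.Icc x (x + 1)) : (P x, P y) ∈ V := hWV _ _ fun i => by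
    obtain h | h := Nat.le_and_le_add_one_iff.1 ⟨hy.1 i, hy.2 i⟩
    · simpa only [P, h] using refl_mem_uniformity (hW i)
    · simpa only [P, h] using ht i (x i)
  obtain ⟨⟨i, _ | _⟩, hi⟩ := hball (P x) (Set.mem_univ _)
  · obtain ⟨y, hy, hle⟩ := (hx i).1
    exact hle.not_gt (hi (hPV y hy))
  · obtain ⟨y, hy, hge⟩ := (hx i).2
    exact hge.not_gt (hi (hPV y hy))

end Miranda

/-! ### Unstable zeros -/

section ClosedSubsets

variable {K : Type u} [TopologicalSpace K]

lemma SepDimLE.exists_isClosed_union_eq {n : ℕ} {Z : Set K} (h : SepDimLE (n + 1) Z)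
    (hZ : IsClosed Z) {x y : K} (hx : x ∈ Z) (hy : y ∈ Z) (hxy : x ≠ y) :
    ∃ A B : Set K, IsClosed A ∧ IsClosed B ∧ x ∉ B ∧ y ∉ A ∧ A ∪ B = Z ∧
      SepDimLE n ↥(A ∩ B) := by
  obtain ⟨A, B, hA, hB, hxB, hyA, hAB, hdim⟩ := h ⟨x, hx⟩ ⟨y, hy⟩ (by simpa using hxy)
  refine ⟨Subtype.val '' A, Subtype.val '' B, hZ.isClosedEmbedding_subtypeVal.isClosedMap _ hA,
    hZ.isClosedEmbedding_subtypeVal.isClosedMap _ hB, ?_, ?_, ?_, ?_⟩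
  · rwa [← Subtype.val_injective.mem_set_image] at hxB
  · rwa [← Subtype.val_injective.mem_set_image] at hyA
  · rw [← Set.image_union, hAB, Set.image_univ, Subtype.range_coe]
  · rw [← Set.image_inter Subtype.val_injective]
    let e := Topology.IsEmbedding.subtypeVal.homeomorphImage (A ∩ B)
    exact .of_injective e.symm.continuous e.symm.injective hdim

end ClosedSubsets

section UnstableZero

variable {K : Type*} [TopologicalSpace K]

/-- Zero is an unstable value on `Z`: maps to `ℝⁿ` can be perturbed so as not to vanish on `Z`.
Continuous functions on `K` carry the compact-open topology, which for compact `K` is that of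
uniform convergence. -/
def ZeroUnstableOn (n : ℕ) (Z : Set K) : Prop :=
  Dense {g : C(K, Fin n → ℝ) | Set.MapsTo g Z {0}ᶜ}

/-- `Z` is the union of two closed sets, one of which misses `E` and the other `F`, on whose
intersection zero is an unstable value of maps to `ℝⁿ`. -/
def HasThinPartition (n : ℕ) (Z E F : Set K) : Prop :=
  ∃ A B : Set K, IsClosed A ∧ IsClosed B ∧ A ∪ B = Z ∧ ZeroUnstableOn n (A ∩ B) ∧
    Disjoint E B ∧ Disjoint F A

namespace ZeroUnstableOn

variable {n : ℕ}

lemma empty : ZeroUnstableOn n (∅ : Set K) :=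
  dense_univ.mono fun g _ => Set.mapsTo_empty g _

lemma mono {Z Z' : Set K} (h : ZeroUnstableOn n Z) (hZ : Z' ⊆ Z) : ZeroUnstableOn n Z' :=
  Dense.mono (fun _ hg => hg.mono_left hZ) h

lemma union {Z Z' : Set K} (h : ZeroUnstableOn n Z) (h' : ZeroUnstableOn n Z') (hZ : IsCompact Z) :
    ZeroUnstableOn n (Z ∪ Z') :=
  (h.inter_of_isOpen_left h'
    (ContinuousMap.isOpen_setOfPred_mapsTo hZ isOpen_compl_singleton)).mono
    fun _ hg => hg.1.union hg.2

end ZeroUnstableOn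

lemma zeroUnstableOn_iff_exists_dist_lt [CompactSpace K] {n : ℕ} {Z : Set K} :
    ZeroUnstableOn n Z ↔ ∀ (g : C(K, Fin n → ℝ)) (ε : ℝ), 0 < ε →
      ∃ t : C(K, Fin n → ℝ), (∀ z i, |t z i - g z i| < ε) ∧ ∀ z ∈ Z, t z ≠ 0 := by
  rw [ZeroUnstableOn, Metric.dense_iff]
  refine forall₃_congr fun g ε hε => exists_congr fun t => and_congr_left' ?_
  rw [Metric.mem_ball, ContinuousMap.dist_lt_iff hε]
  exact forall_congr' fun z => dist_pi_lt_iff hε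

namespace HasThinPartition

variable {n : ℕ} {Z E F : Set K}

lemma symm (h : HasThinPartition n Z E F) : HasThinPartition n Z F E :=
  let ⟨A, B, hA, hB, hAB, hdim, hE, hF⟩ := h
  ⟨B, A, hB, hA, by rw [Set.union_comm, hAB], by rwa [Set.inter_comm], hF, hE⟩

lemma of_forall_singleton [CompactSpace K] (hZ : IsClosed Z) (hE : IsClosed E)
    (h : ∀ x ∈ E, HasThinPartition n Z {x} F) : HasThinPartition n Z E F := by
  refine hE.isCompact.induction_on ?_ ?_ ?_ fun x hx => ?_
  · exact ⟨∅, Z, isClosed_empty, hZ, Set.empty_union Z, by simpa using ZeroUnstableOn.empty,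
      Set.empty_disjoint Z, Set.disjoint_empty F⟩
  · rintro S T hST ⟨A, B, hA, hB, hAB, hdim, hT, hF⟩
    exact ⟨A, B, hA, hB, hAB, hdim, hT.mono_left hST, hF⟩
  · rintro S T ⟨A, B, hA, hB, hAB, hdim, hS, hF⟩ ⟨A', B', hA', hB', hAB', hdim', hT, hF'⟩
    refine ⟨A ∪ A', B ∩ B', hA.union hA', hB.inter hB', ?_,
      (hdim.union hdim' (hA.inter hB).isCompact).mono ?_,
      (hS.mono_right Set.inter_subset_left).union_left (hT.mono_right Set.inter_subset_right),
      hF.union_right hF'⟩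
    · rw [Set.ext_iff] at hAB hAB' ⊢
      exact fun z => by grind
    · rintro z ⟨hz | hz, hzB, hzB'⟩
      exacts [.inl ⟨hz, hzB⟩, .inr ⟨hz, hzB'⟩]
  · obtain ⟨A, B, hA, hB, hAB, hdim, hxB, hF⟩ := h x hx
    exact ⟨Bᶜ, mem_nhdsWithin_of_mem_nhds
      (hB.isOpen_compl.mem_nhds (Set.disjoint_singleton_left.1 hxB)),
      A, B, hA, hB, hAB, hdim, disjoint_compl_left, hF⟩

end HasThinPartition

-- Off the zeros of a good perturbation `t` of the tail, the head does not matter; near these zeros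
-- `A` and `B` are disjoint, and the head can be pushed below zero on `A` and above zero on `B`.
lemma ZeroUnstableOn.succ [CompactSpace K] [T2Space K] {n : ℕ} {Z : Set K} (hZ : IsClosed Z)
    (h : ∀ E F, IsClosed E → IsClosed F → E ⊆ Z → F ⊆ Z → Disjoint E F →
      HasThinPartition n Z E F) : ZeroUnstableOn (n + 1) Z := by
  refine zeroUnstableOn_iff_exists_dist_lt.2 fun g ε hε => ?_
  obtain ⟨e, he, heε⟩ := exists_between hε
  have hg_zero : Continuous fun z => g z 0 := by fun_prop
  have hdisj : Disjoint (Z ∩ {z | g z 0 ≤ -e}) (Z ∩ {z | e ≤ g z 0}) :=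
    Set.disjoint_left.2 fun z hz hz' => by
      have hle : g z 0 ≤ -e := hz.2
      have hge : e ≤ g z 0 := hz'.2
      linarith
  obtain ⟨A, B, hA, hB, rfl, hdim, hE, hF⟩ := h _ _
    (hZ.inter (isClosed_le hg_zero continuous_const))
    (hZ.inter (isClosed_le continuous_const hg_zero)) Set.inter_subset_left
    Set.inter_subset_left hdisj
  obtain ⟨t, ht, htAB⟩ := zeroUnstableOn_iff_exists_dist_lt.1 hdim
    ⟨fun z i => g z i.succ, continuous_pi fun i => (continuous_apply _).comp g.continuous⟩ ε hε
  have hC : IsClosed {z | t z = 0} := isClosed_eq t.continuous continuous_const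
  obtain ⟨u, hu0, hu1, hu⟩ := exists_continuous_zero_one_of_isClosed (hA.inter hC) (hB.inter hC)
    (Set.disjoint_left.2 fun z hz hz' => htAB z ⟨hz.1, hz'.1⟩ hz.2)
  let g' : C(K, Fin (n + 1) → ℝ) :=
    ⟨fun z => Fin.cons (g z 0 + e * (2 * u z - 1)) (t z), by fun_prop⟩
  refine ⟨g', fun z => Fin.forall_fin_succ.2 ⟨?_, ht z⟩, fun z hz hz0 => ?_⟩
  · change |g z 0 + e * (2 * u z - 1) - g z 0| < ε
    rw [abs_lt]
    constructor <;> nlinarith [(hu z).1, (hu z).2]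
  · have hhead : g z 0 + e * (2 * u z - 1) = 0 := congrFun hz0 0
    have htail : t z = 0 := congrArg Fin.tail hz0
    rcases hz with hzA | hzB
    · rw [hu0 ⟨hzA, htail⟩, Pi.zero_apply] at hhead
      have hge : e ≤ g z 0 := by linarith
      exact Set.disjoint_left.1 hF ⟨.inl hzA, hge⟩ hzA
    · rw [hu1 ⟨hzB, htail⟩, Pi.one_apply] at hhead
      have hle : g z 0 ≤ -e := by linarith
      exact Set.disjoint_left.1 hE ⟨.inr hzB, hle⟩ hzB

end UnstableZero

theorem zeroUnstableOn_of_sepDimLE {K : Type u} [TopologicalSpace K] [CompactSpace K] [T2Space K]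
    {n : ℕ} {Z : Set K} (hZ : IsClosed Z) (h : SepDimLE n Z) : ZeroUnstableOn n Z := by
  induction n generalizing Z with
  | zero => exact ZeroUnstableOn.empty.mono (Set.isEmpty_coe_sort.1 h).subset
  | succ n ih =>
    have hpoints {x y} (hx : x ∈ Z) (hy : y ∈ Z) (hxy : x ≠ y) :
        HasThinPartition n Z {x} {y} := by
      obtain ⟨A, B, hA, hB, hxB, hyA, hAB, hdim⟩ := h.exists_isClosed_union_eq hZ hx hy hxy
      exact ⟨A, B, hA, hB, hAB, ih (hA.inter hB) hdim, Set.disjoint_singleton_left.2 hxB,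
        Set.disjoint_singleton_left.2 hyA⟩
    refine .succ hZ fun E F hE hF hEZ hFZ hEF => .of_forall_singleton hZ hE fun x hx => ?_
    refine .symm <| .of_forall_singleton hZ hF fun y hy => ?_
    exact hpoints (hFZ hy) (hEZ hx) (hEF.ne_of_mem hx hy).symm

theorem not_sepDimLE_pi {r : ℕ} {J : Fin r → Type u} [∀ i, TopologicalSpace (J i)]
    [∀ i, CompactSpace (J i)] [∀ i, T2Space (J i)] [∀ i, PreconnectedSpace (J i)]
    [∀ i, Nontrivial (J i)] : ¬ SepDimLE r (∀ i, J i) := by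
  intro h
  choose a b hab using fun i => exists_pair_ne (J i)
  choose f hfa hfb _ using fun i => exists_continuous_zero_one_of_isClosed
    (isClosed_singleton (x := a i)) (isClosed_singleton (x := b i))
    (Set.disjoint_singleton.2 (hab i))
  have huniv : SepDimLE r (Set.univ : Set (∀ i, J i)) :=
    .of_injective continuous_subtype_val Subtype.val_injective h
  obtain ⟨g, hg, hne⟩ := zeroUnstableOn_iff_exists_dist_lt.1
    (zeroUnstableOn_of_sepDimLE isClosed_univ huniv)
    ⟨fun u i => f i (u i) - 1 / 2, by fun_prop⟩ (1 / 2) one_half_pos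
  have hdist (u i) : |g u i - (f i (u i) - 1 / 2)| < 1 / 2 := hg u i
  obtain ⟨u, hu⟩ := exists_eq_zero_of_pi (a := a) (b := b) g.continuous
    (fun i u hu => by
      have := (abs_lt.1 (hdist u i)).2
      rw [hu, hfa i rfl, Pi.zero_apply] at this
      linarith)
    (fun i u hu => by
      have := (abs_lt.1 (hdist u i)).1
      rw [hu, hfb i rfl, Pi.one_apply] at this
      linarith)
  exact hne u (Set.mem_univ u) hu

/-! ### Rank is at most dimension -/

section Edges

variable {X : Type*} {m : X → X → X → X}

lemma IsBoolHom.apply_of_mem_interval {φ : X → Bool} (hφ : IsBoolHom m φ) {a b c : X}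
    (hc : c ∈ mInterval m a b) : boolMajority (φ a) (φ b) (φ c) = φ c := by
  rw [← hφ, hc]

/-- The interval `I(z, e)` is linearly ordered by `a ≤ b ↔ a ∈ I(z, b)`. -/
def IsLinearInterval (m : X → X → X → X) (z e : X) : Prop :=
  ∀ a ∈ mInterval m z e, ∀ b ∈ mInterval m z e, m z a b = a ∨ m z a b = b

namespace IsMedianAlgebra

lemma exists_isBoolHom_of_median_ne (h : IsMedianAlgebra m) {z e a b : X}
    (ha : a ∈ mInterval m z e) (hb : b ∈ mInterval m z e) (hab : m z a b ≠ a) :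
    ∃ φ, IsBoolHom m φ ∧ φ z = false ∧ φ e = true ∧ φ a = true ∧ φ b = false := by
  obtain ⟨φ, hφ, hmed, hφa⟩ := h.exists_isBoolHom_of_ne hab
  have cases_bool : ∀ x y s t, boolMajority x y s = s → boolMajority x y t = t →
      boolMajority x s t = false → s = true → x = false ∧ y = true ∧ t = false := by decide
  obtain ⟨hz, he, hφb⟩ := cases_bool _ _ _ _ (hφ.apply_of_mem_interval ha)
    (hφ.apply_of_mem_interval hb) ((hφ z a b).symm.trans hmed) hφa
  exact ⟨φ, hφ, hz, he, hφa, hφb⟩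

lemma mem_interval_left_of_between (h : IsMedianAlgebra m) {o x y z p : X} (hxz : m o x z = x)
    (hp : p ∈ mInterval m x z) (hpy : m o p y = p) : p ∈ mInterval m x y := by
  rw [mem_mInterval] at *
  refine h.ext_boolHom fun φ hφ => ?_
  apply_fun φ at hxz hp hpy
  rw [hφ] at *
  revert hxz hp hpy
  generalize φ o = o, φ x = x, φ y = y, φ z = z, φ p = p
  decide +revert

lemma mem_interval_right_of_between (h : IsMedianAlgebra m) {o x y z p : X} (hxz : m o x z = x)
    (hp : p ∈ mInterval m x z) (hyp : m o p y = y) : p ∈ mInterval m y z := by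
  rw [mem_mInterval] at *
  refine h.ext_boolHom fun φ hφ => ?_
  apply_fun φ at hxz hp hyp
  rw [hφ] at *
  revert hxz hp hyp
  generalize φ o = o, φ x = x, φ y = y, φ z = z, φ p = p
  decide +revert

lemma interval_subset_union (h : IsMedianAlgebra m) {o e x y z : X}
    (hlin : IsLinearInterval m o e) (hx : x ∈ mInterval m o e) (hy : y ∈ mInterval m o e)
    (hz : z ∈ mInterval m o e) : mInterval m x z ⊆ mInterval m x y ∪ mInterval m y z := by
  intro p hp
  have hpoe := h.convex_interval o e x hx z hz hp
  rcases hlin x hx z hz with hxz | hzx <;> rcases hlin p hpoe y hy with hpy | hyp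
  · exact .inl (h.mem_interval_left_of_between hxz hp hpy)
  · exact .inr (h.mem_interval_right_of_between hxz hp hyp)
  all_goals
    rw [h.right_comm] at hzx
    rw [h.interval_comm] at hp
  · exact .inr (h.interval_comm z y ▸ h.mem_interval_left_of_between hzx hp hpy)
  · exact .inl (h.interval_comm y x ▸ h.mem_interval_right_of_between hzx hp hyp)

lemma interval_eq_range (h : IsMedianAlgebra m) (a b : X) :
    mInterval m a b = Set.range (m a b) :=
  Set.Subset.antisymm (fun c hc => ⟨c, hc⟩) (Set.range_subset_iff.2 (h.median_mem_interval a b))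

end IsMedianAlgebra

namespace IsCubeMap

variable {n : ℕ} {f : (Fin n → Bool) → X}

-- If `φ₁` and `φ₂` were transversal, replacing the `i`-th coordinate of the cube by the pair of
-- them would give a cube of dimension `n + 1`.
lemma not_surjective_of_rankLT (hf : IsCubeMap m f) (h : IsMedianAlgebra m)
    (hr : RankLT m (n + 1)) (hinj : Function.Injective f) {i : Fin n} {φ₁ φ₂ : X → Bool}
    (h₁ : IsBoolHom m φ₁) (h₂ : IsBoolHom m φ₂)
    (h₁f : ∀ v, φ₁ (f v) = v i) (h₂f : ∀ v, φ₂ (f v) = v i) :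
    ¬ Function.Surjective fun x => (φ₁ x, φ₂ x) := by
  intro hsurj
  choose ψ hψ hψbot hψaxis using fun j =>
    h.exists_isBoolHom_of_ne (hinj.ne (bot_ne_axisVertex j))
  have hψf (j) := hf.boolHom_apply (hψ j) (hψbot j) (hψaxis j)
  let Θ (x : X) : Fin (n + 1) → Bool := Fin.cons (φ₂ x) (Function.update (ψ · x) i (φ₁ x))
  have hΘ (j) : IsBoolHom m (Θ · j) := by
    cases j using Fin.cases with
    | zero => exact h₂
    | succ j =>
      rcases eq_or_ne j i with rfl | hj
      · simpa [Θ] using h₁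
      · simpa [Θ, hj] using hψ j
  refine (hr.lt_of_surjective h hΘ fun v => ?_).false
  obtain ⟨x, hx⟩ := hsurj (v i.succ, v 0)
  obtain ⟨hx₁, hx₂⟩ := Prod.ext_iff.1 hx
  let side (c : Bool) : X := f (Function.update (Fin.tail v) i c)
  refine ⟨m x (side false) (side true), funext fun j => ?_⟩
  cases j using Fin.cases with
  | zero =>
    change φ₂ (m x (side false) (side true)) = v 0
    simpa [side, h₂ _ _ _, h₂f, boolMajority] using hx₂
  | succ j =>
    rcases eq_or_ne j i with rfl | hj
    · simpa [Θ, side, h₁ _ _ _, h₁f, boolMajority] using hx₁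
    · simp [Θ, side, hψ j _ _ _, hψf, hj, Fin.tail]

lemma isLinearInterval_edge (hf : IsCubeMap m f) (h : IsMedianAlgebra m)
    (hr : RankLT m (n + 1)) (hinj : Function.Injective f) (i : Fin n) :
    IsLinearInterval m (f ⊥) (f (axisVertex i)) := by
  intro a ha b hb
  by_contra! hab
  obtain ⟨φ₁, h₁, h₁z, h₁e, h₁a, h₁b⟩ := h.exists_isBoolHom_of_median_ne ha hb hab.1
  obtain ⟨φ₂, h₂, h₂z, h₂e, h₂b, h₂a⟩ :=
    h.exists_isBoolHom_of_median_ne hb ha (h.right_comm _ a b ▸ hab.2)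
  refine hf.not_surjective_of_rankLT h hr hinj h₁ h₂ (hf.boolHom_apply h₁ h₁z h₁e)
    (hf.boolHom_apply h₂ h₂z h₂e) ?_
  rintro ⟨_ | _, _ | _⟩
  exacts [⟨f ⊥, Prod.ext h₁z h₂z⟩, ⟨b, Prod.ext h₁b h₂b⟩, ⟨a, Prod.ext h₁a h₂a⟩,
    ⟨f (axisVertex i), Prod.ext h₁e h₂e⟩]

end IsCubeMap

end Edges

section OrthogonalIntervals

variable {X ι : Type*} {m : X → X → X → X} {z w : X} {e : ι → X}

/-- The join, in the order of `I(z, w)` based at `z`, of the points `u i` for `i` in `l`. -/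
def listJoin (m : X → X → X → X) (z w : X) (u : ι → X) (l : List ι) : X :=
  l.foldr (fun i acc => m w (u i) acc) z

lemma IsMedianAlgebra.median_listJoin [DecidableEq ι] (h : IsMedianAlgebra m)
    (he : ∀ i, m z (e i) w = e i) (horth : Pairwise fun i j => m z (e i) (e j) = z)
    {u : ι → X} (hu : ∀ i, u i ∈ mInterval m z (e i)) (i : ι) (l : List ι) :
    m z (e i) (listJoin m z w u l) = if i ∈ l then u i else z := by
  induction l with
  | nil => exact h.self_outer z (e i)
  | cons j l ih =>
    rw [listJoin, List.foldr_cons, h.distrib₃, he]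
    change m (e i) _ (m z (e i) (listJoin m z w u l)) = _
    rw [ih]
    rcases eq_or_ne i j with rfl | hij
    · rw [mem_mInterval.1 (hu i), if_pos List.mem_cons_self]
      split_ifs
      · exact h.self_right _ _
      · rw [← h.rotate, hu i]
    · have hproj : m z (e i) (u j) = z :=
        h.median_eq_left_of_mem (h.right_mem_interval z (e i)) (hu j) (horth hij)
      rw [hproj]
      by_cases hi : i ∈ l
      · rw [if_pos hi, if_pos (List.mem_cons_of_mem _ hi), h.left_comm, hu i]
      · rw [if_neg hi, if_neg (by simp [hij, hi]), h.self_right]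

end OrthogonalIntervals

namespace IsLocallyConvexMedian

variable {X : Type*} [TopologicalSpace X] {m : X → X → X → X}

lemma isPreconnected_interval [PreconnectedSpace X] (h : IsLocallyConvexMedian m) (a b : X) :
    IsPreconnected (mInterval m a b) := by
  rw [h.isMedianAlgebra.interval_eq_range]
  exact isPreconnected_range (h.continuous_right a b)

-- Having a finite subcover is a locally trivial, transitive relation between the endpoints of an
-- interval.
lemma isCompact_interval (h : IsLocallyConvexMedian m) {z e : X}
    (hlin : IsLinearInterval m z e) (hconn : IsPreconnected (mInterval m z e)) :
    IsCompact (mInterval m z e) := by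
  classical
  have hm := h.isMedianAlgebra
  refine isCompact_of_finite_subcover fun U hU hcover => ?_
  refine hconn.induction₂' (fun x y => ∃ F : Finset _, mInterval m x y ⊆ ⋃ i ∈ F, U i)
    (fun x hx => ?_) ?_ (hm.left_mem_interval z e) (hm.right_mem_interval z e)
  · obtain ⟨i, hi⟩ := Set.mem_iUnion.1 (hcover hx)
    obtain ⟨V, hV, hVU, hVc⟩ := h.locallyConvex x (U i) ((hU i).mem_nhds hi)
    filter_upwards [mem_nhdsWithin_of_mem_nhds hV] with y hy
    have hxV := mem_of_mem_nhds hV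
    constructor <;> refine ⟨{i}, fun p hp => ?_⟩ <;>
      rw [Finset.set_biUnion_singleton]
    exacts [hVU (hVc x hxV y hy hp), hVU (hVc y hy x hxV hp)]
  · rintro x y w hx hy hw ⟨F, hF⟩ ⟨F', hF'⟩
    refine ⟨F ∪ F', (hm.interval_subset_union hlin hx hy hw).trans ?_⟩
    rw [Finset.set_biUnion_union]
    exact Set.union_subset_union hF hF'

lemma continuous_listJoin (h : IsLocallyConvexMedian m) {ι : Type*} (z w : X) (l : List ι) :
    Continuous fun u : ι → X => listJoin m z w u l := by
  induction l with
  | nil => exact continuous_const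
  | cons i l ih =>
    exact h.continuous.comp (continuous_const.prodMk ((continuous_apply i).prodMk ih))

theorem not_sepDimLE_of_isCubeMap {X : Type u} [TopologicalSpace X] [T2Space X]
    [PreconnectedSpace X] {m : X → X → X → X} (h : IsLocallyConvexMedian m) {r : ℕ}
    (hr : RankLT m (r + 1)) {f : (Fin r → Bool) → X} (hinj : Function.Injective f)
    (hf : IsCubeMap m f) : ¬ SepDimLE r X := by
  have hm := h.isMedianAlgebra
  let J (i : Fin r) : Set X := mInterval m (f ⊥) (f (axisVertex i))
  have hconn (i) : IsPreconnected (J i) := h.isPreconnected_interval _ _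
  have hpre (i) : PreconnectedSpace (J i) := Subtype.preconnectedSpace (hconn i)
  have hcomp (i) : CompactSpace (J i) := isCompact_iff_compactSpace.1 <|
    h.isCompact_interval (hf.isLinearInterval_edge hm hr hinj i) (hconn i)
  have hnontriv (i) : Nontrivial (J i) :=
    ⟨⟨f ⊥, hm.left_mem_interval _ _⟩, ⟨f (axisVertex i), hm.right_mem_interval _ _⟩,
      fun heq => hinj.ne (bot_ne_axisVertex i) (congrArg Subtype.val heq)⟩
  have htop (i) : m (f ⊥) (f (axisVertex i)) (f ⊤) = f (axisVertex i) :=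
    hf.median_bot_axisVertex i ⊤
  have horth : Pairwise fun i j => m (f ⊥) (f (axisVertex i)) (f (axisVertex j)) = f ⊥ :=
    fun i j hij => (hf.median_bot_axisVertex i _).trans (by simp [axisVertex, hij])
  let G (u : ∀ i, J i) : X := listJoin m (f ⊥) (f ⊤) (fun i => u i) (List.finRange r)
  have hG (u i) : m (f ⊥) (f (axisVertex i)) (G u) = u i := by
    simpa using hm.median_listJoin htop horth (fun i => (u i).2) i (List.finRange r)
  have hGinj : Function.Injective G := fun u v huv =>
    funext fun i => Subtype.ext <| by rw [← hG u, huv, hG]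
  exact fun hdim => not_sepDimLE_pi <| hdim.of_injective
    ((h.continuous_listJoin _ _ _).comp (by fun_prop)) hGinj

end IsLocallyConvexMedian

lemma continuous_median_of_dist_le {X : Type*} [PseudoMetricSpace X] {m : X → X → X → X} {k : ℝ}
    (hlip : ∀ a b c a' b' c',
      dist (m a b c) (m a' b' c') ≤ k * (dist a a' + dist b b' + dist c c')) :
    Continuous fun p : X × X × X => m p.1 p.2.1 p.2.2 := by
  refine continuous_iff_continuousAt.2 fun q => tendsto_iff_dist_tendsto_zero.2 ?_
  refine squeeze_zero (fun _ => dist_nonneg) (fun _ => hlip _ _ _ _ _ _) ?_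
  have hbound : Continuous fun p : X × X × X =>
      k * (dist p.1 q.1 + dist p.2.1 q.2.1 + dist p.2.2 q.2.2) := by fun_prop
  simpa using hbound.tendsto q

theorem sepDim_eq_rank_general {X : Type u} [TopologicalSpace X] [T2Space X] [PreconnectedSpace X]
    {m : X → X → X → X} (h : IsLocallyConvexMedian m) {r : ℕ} (hrank : RankLT m (r + 1))
    (hex : ∃ f : (Fin r → Bool) → X, Function.Injective f ∧ IsCubeMap m f) :
    SepDimLE (r + 1) X ∧ ¬ SepDimLE r X :=
  let ⟨_, hinj, hf⟩ := hex
  ⟨h.sepDimLE_of_rankLT hrank, h.not_sepDimLE_of_isCubeMap hrank hinj hf⟩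

/-- A connected metric space with a Lipschitz, locally convex median of rank `r`
has separation dimension exactly `r`. -/
theorem sepDim_eq_rank {X : Type u} [MetricSpace X] [ConnectedSpace X]
    (m : X → X → X → X) (hmed : IsMedianAlgebra m)
    (k : ℝ) (hk : 0 ≤ k)
    (hlip : ∀ a b c a' b' c' : X,
      dist (m a b c) (m a' b' c') ≤ k * (dist a a' + dist b b' + dist c c'))
    (hlc : ∀ x : X, ∀ U ∈ nhds x, ∃ V ∈ nhds x, V ⊆ U ∧ MConvex m V)
    (r : ℕ)
    (hrank : ∀ n : ℕ, ∀ f : (Fin n → Bool) → X, Function.Injective f →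
      (∀ x y z, f (bmed x y z) = m (f x) (f y) (f z)) → n ≤ r)
    (hex : ∃ f : (Fin r → Bool) → X, Function.Injective f ∧
      ∀ x y z, f (bmed x y z) = m (f x) (f y) (f z)) :
    SepDimLE (r + 1) X ∧ ¬ SepDimLE r X :=
  sepDim_eq_rank_general ⟨hmed, continuous_median_of_dist_le hlip, hlc⟩
    (fun n f hinj hf => Nat.lt_succ_of_le (hrank n f hinj hf)) hex
end
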